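/- Let τ > 0 and X ∈ ℝ^{n₁×n₂} with singular value decomposition X = U Σ Vᵀ, where Σ = diag(σ₁, …, σ_m). Then the matrix W = U D_τ(Σ) Vᵀ, where D_τ(Σ) = diag(max(σ_i − τ, 0)), is the unique minimizer over W ∈ ℝ^{n₁×n₂} of (1/2)‖X − W‖_F² + τ‖W‖_*. -/

import Mathlib

open Finset Matrix

/-- The penalty function `φ_α(t) = α|t| / (1 + α|t|)`. -/
noncomputable def phi (α t : ℝ) : ℝ := α * |t| / (1 + α * |t|)

/-- The ℓ² norm of a vector. -/
noncomputable def l2 {p : ℕ} (x : Fin p → ℝ) : ℝ := Real.sqrt (∑ i, (x i) ^ 2)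

/-- The Frobenius norm of a matrix. -/
noncomputable def frob {n₁ n₂ : ℕ} (X : Matrix (Fin n₁) (Fin n₂) ℝ) : ℝ :=
  Real.sqrt (∑ i, ∑ j, (X i j) ^ 2)

/-- The rectangular `n₁ × n₂` matrix with `σ` on the diagonal and zeros elsewhere. -/
def diagRect {n₁ n₂ : ℕ} (σ : Fin (min n₁ n₂) → ℝ) : Matrix (Fin n₁) (Fin n₂) ℝ :=
  Matrix.of fun i j =>
    if h : (i : ℕ) = (j : ℕ) then σ ⟨i, lt_min i.isLt (lt_of_eq_of_lt h j.isLt)⟩ else 0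

/-- `σ` is the (nonincreasing) sequence of singular values of `X`:
`σ` is antitone, nonnegative, and `X = U (diag σ) Vᵀ` for orthogonal `U`, `V`. -/
def IsSVDVals {n₁ n₂ : ℕ} (X : Matrix (Fin n₁) (Fin n₂) ℝ)
    (σ : Fin (min n₁ n₂) → ℝ) : Prop :=
  Antitone σ ∧ (∀ i, 0 ≤ σ i) ∧
  ∃ (U : Matrix (Fin n₁) (Fin n₁) ℝ) (V : Matrix (Fin n₂) (Fin n₂) ℝ),
    Uᵀ * U = 1 ∧ Vᵀ * V = 1 ∧ X = U * diagRect σ * Vᵀ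

/-- `𝒜` satisfies the rank restricted isometry property of order `r`
with constant `δ ∈ [0,1)`. -/
def RankRIP {n₁ n₂ n₃ : ℕ} (𝒜 : Matrix (Fin n₁) (Fin n₂) ℝ →ₗ[ℝ] (Fin n₃ → ℝ))
    (r : ℕ) (δ : ℝ) : Prop :=
  0 ≤ δ ∧ δ < 1 ∧ ∀ X : Matrix (Fin n₁) (Fin n₂) ℝ, X.rank ≤ r →
    (1 - δ) * (frob X) ^ 2 ≤ (l2 (𝒜 X)) ^ 2 ∧
    (l2 (𝒜 X)) ^ 2 ≤ (1 + δ) * (frob X) ^ 2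

/-- Entrywise inner product. -/
noncomputable def ipF {n₁ n₂ : ℕ} (M N : Matrix (Fin n₁) (Fin n₂) ℝ) : ℝ :=
  ∑ i, ∑ j, M i j * N i j

lemma frob_sq_eq {n₁ n₂ : ℕ} (M : Matrix (Fin n₁) (Fin n₂) ℝ) : (frob M) ^ 2 = ipF M M := by
  unfold frob ipF
  have h : (0:ℝ) ≤ ∑ i, ∑ j, (M i j) ^ 2 :=
    Finset.sum_nonneg fun i _ => Finset.sum_nonneg fun j _ => sq_nonneg _
  refine (Real.sq_sqrt h).trans ?_
  simp only [sq]

lemma ipF_self_pos {n₁ n₂ : ℕ} (M : Matrix (Fin n₁) (Fin n₂) ℝ) (h : M ≠ 0) : 0 < ipF M M := by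
  unfold ipF
  have hnn : ∀ i, 0 ≤ ∑ j, M i j * M i j :=
    fun i => Finset.sum_nonneg fun j _ => mul_self_nonneg _
  refine lt_of_le_of_ne (Finset.sum_nonneg fun i _ => hnn i) ?_
  intro h0
  apply h
  ext i j
  have h1 := (Finset.sum_eq_zero_iff_of_nonneg (fun i _ => hnn i)).1 h0.symm i (Finset.mem_univ i)
  have h2 := (Finset.sum_eq_zero_iff_of_nonneg
    (fun j _ => mul_self_nonneg (M i j))).1 h1 j (Finset.mem_univ j)
  simpa using h2

lemma frob_expand {n₁ n₂ : ℕ} (X W W' : Matrix (Fin n₁) (Fin n₂) ℝ) :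
    ipF (X - W') (X - W') = ipF (X - W) (X - W) + 2 * ipF (X - W) W - 2 * ipF (X - W) W'
      + ipF (W' - W) (W' - W) := by
  unfold ipF
  simp only [Finset.mul_sum, ← Finset.sum_add_distrib, ← Finset.sum_sub_distrib]
  refine Finset.sum_congr rfl fun i _ => Finset.sum_congr rfl fun j _ => ?_
  simp only [Matrix.sub_apply]
  ring

lemma svd_apply {n₁ n₂ : ℕ} (U : Matrix (Fin n₁) (Fin n₁) ℝ) (V : Matrix (Fin n₂) (Fin n₂) ℝ)
    (s : Fin (min n₁ n₂) → ℝ) (i : Fin n₁) (j : Fin n₂) :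
    (U * diagRect s * Vᵀ) i j =
      ∑ k, s k * (U i (Fin.castLE (min_le_left _ _) k) * V j (Fin.castLE (min_le_right _ _) k)) := by
  have hd : (diagRect s : Matrix (Fin n₁) (Fin n₂) ℝ) = ∑ k, s k •
      Matrix.single (Fin.castLE (min_le_left _ _) k) (Fin.castLE (min_le_right _ _) k) (1:ℝ) := by
    ext a b
    simp only [diagRect, Matrix.of_apply, Matrix.sum_apply, Matrix.smul_apply, Matrix.single_apply,
      smul_eq_mul]
    split_ifs with h
    · rw [Finset.sum_eq_single ⟨a, lt_min a.isLt (lt_of_eq_of_lt h b.isLt)⟩]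
      · simp [Fin.ext_iff, h]
      · intro k _ hk
        rw [if_neg, mul_zero]
        rintro ⟨h1, _⟩
        exact hk (by simpa [Fin.ext_iff] using h1)
      · simp
    · symm
      refine Finset.sum_eq_zero fun k _ => ?_
      rw [if_neg, mul_zero]
      rintro ⟨h1, h2⟩
      exact h (by rw [← h1, ← h2]; rfl)
  rw [hd, Matrix.mul_sum, Matrix.sum_mul, Matrix.sum_apply]
  refine Finset.sum_congr rfl fun k _ => ?_
  rw [Matrix.mul_smul, Matrix.smul_mul, Matrix.smul_apply, smul_eq_mul]
  congr 1
  rw [Matrix.mul_apply, Finset.sum_eq_single (Fin.castLE (min_le_right _ _) k)]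
  · simp
  · intro b _ hb
    rw [Matrix.mul_single_apply_of_ne _ _ _ _ _ hb, zero_mul]
  · simp

lemma ipF_svd {n₁ n₂ : ℕ} (U U' : Matrix (Fin n₁) (Fin n₁) ℝ) (V V' : Matrix (Fin n₂) (Fin n₂) ℝ)
    (s t : Fin (min n₁ n₂) → ℝ) :
    ipF (U * diagRect s * Vᵀ) (U' * diagRect t * V'ᵀ) =
      ∑ l, ∑ k, s k * t l *
        ((Uᵀ * U') (Fin.castLE (min_le_left _ _) k) (Fin.castLE (min_le_left _ _) l) *
         (Vᵀ * V') (Fin.castLE (min_le_right _ _) k) (Fin.castLE (min_le_right _ _) l)) := by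
  unfold ipF
  have h1 : ∀ i j, (U * diagRect s * Vᵀ) i j * (U' * diagRect t * V'ᵀ) i j =
      ∑ l, ∑ k, s k * t l *
        ((U i (Fin.castLE (min_le_left _ _) k) * U' i (Fin.castLE (min_le_left _ _) l)) *
         (V j (Fin.castLE (min_le_right _ _) k) * V' j (Fin.castLE (min_le_right _ _) l))) := by
    intro i j
    rw [svd_apply, svd_apply, Finset.sum_mul_sum, Finset.sum_comm]
    refine Finset.sum_congr rfl fun l _ => Finset.sum_congr rfl fun k _ => ?_
    ring
  simp only [h1]
  simp only [Finset.sum_comm (s := (Finset.univ : Finset (Fin n₂)))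
    (t := (Finset.univ : Finset (Fin (min n₁ n₂))))]
  simp only [Finset.sum_comm (s := (Finset.univ : Finset (Fin n₁)))
    (t := (Finset.univ : Finset (Fin (min n₁ n₂))))]
  refine Finset.sum_congr rfl fun l _ => Finset.sum_congr rfl fun k _ => ?_
  simp only [Matrix.mul_apply, Matrix.transpose_apply]
  rw [Finset.sum_mul_sum, Finset.mul_sum]
  refine Finset.sum_congr rfl fun i _ => ?_
  rw [Finset.mul_sum]

lemma col_sq {n m : ℕ} (A : Matrix (Fin n) (Fin n) ℝ) (hA : Aᵀ * A = 1) (h : m ≤ n) (l : Fin n) :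
    ∑ k : Fin m, (A (Fin.castLE h k) l) ^ 2 ≤ 1 := by
  have h1 : ∑ k, (A k l) ^ 2 = 1 := by
    have := congrFun (congrFun hA l) l
    simpa [Matrix.mul_apply, sq] using this
  rw [← h1]
  refine (Finset.sum_map Finset.univ (Fin.castLEEmb h) (fun k => (A k l) ^ 2)).symm.le.trans ?_
  exact Finset.sum_le_sum_of_subset_of_nonneg (Finset.subset_univ _) fun _ _ _ => sq_nonneg _

lemma orth_mul {n : ℕ} (U U' : Matrix (Fin n) (Fin n) ℝ) (hU : Uᵀ * U = 1) (hU' : U'ᵀ * U' = 1) :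
    (Uᵀ * U')ᵀ * (Uᵀ * U') = 1 := by
  have h : U * Uᵀ = 1 := mul_eq_one_comm.1 hU
  rw [Matrix.transpose_mul, Matrix.transpose_transpose, Matrix.mul_assoc, ← Matrix.mul_assoc U, h,
    Matrix.one_mul, hU']

lemma ipF_svd_self {n₁ n₂ : ℕ} (U : Matrix (Fin n₁) (Fin n₁) ℝ) (V : Matrix (Fin n₂) (Fin n₂) ℝ)
    (hU : Uᵀ * U = 1) (hV : Vᵀ * V = 1) (s t : Fin (min n₁ n₂) → ℝ) :
    ipF (U * diagRect s * Vᵀ) (U * diagRect t * Vᵀ) = ∑ l, s l * t l := by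
  rw [ipF_svd, hU, hV]
  refine Finset.sum_congr rfl fun l _ => ?_
  rw [Finset.sum_eq_single l]
  · simp
  · intro k _ hk
    rw [Matrix.one_apply_ne, zero_mul, mul_zero]
    simpa [Fin.ext_iff] using hk
  · simp

lemma ipF_svd_le {n₁ n₂ : ℕ} (U U' : Matrix (Fin n₁) (Fin n₁) ℝ)
    (V V' : Matrix (Fin n₂) (Fin n₂) ℝ)
    (hU : Uᵀ * U = 1) (hV : Vᵀ * V = 1) (hU' : U'ᵀ * U' = 1) (hV' : V'ᵀ * V' = 1)
    (s t : Fin (min n₁ n₂) → ℝ) (τ : ℝ) (hs : ∀ k, 0 ≤ s k) (hsτ : ∀ k, s k ≤ τ) (hτ : 0 ≤ τ)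
    (ht : ∀ k, 0 ≤ t k) :
    ipF (U * diagRect s * Vᵀ) (U' * diagRect t * V'ᵀ) ≤ τ * ∑ l, t l := by
  rw [ipF_svd, Finset.mul_sum]
  refine Finset.sum_le_sum fun l _ => ?_
  have hA := col_sq _ (orth_mul U U' hU hU') (min_le_left n₁ n₂) (Fin.castLE (min_le_left _ _) l)
  have hB := col_sq _ (orth_mul V V' hV hV') (min_le_right n₁ n₂) (Fin.castLE (min_le_right _ _) l)
  calc _ ≤ ∑ k, τ * t l / 2 *
        (((Uᵀ * U') (Fin.castLE (min_le_left _ _) k) (Fin.castLE (min_le_left _ _) l)) ^ 2 +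
         ((Vᵀ * V') (Fin.castLE (min_le_right _ _) k) (Fin.castLE (min_le_right _ _) l)) ^ 2) := by
        refine Finset.sum_le_sum fun k _ => ?_
        generalize (Uᵀ * U') _ _ = a
        generalize (Vᵀ * V') _ _ = b
        have h1 : a * b ≤ (a ^ 2 + b ^ 2) / 2 := by nlinarith [sq_nonneg (a - b)]
        have h2 : 0 ≤ (a ^ 2 + b ^ 2) / 2 := by positivity
        have h3 : 0 ≤ s k * t l := mul_nonneg (hs k) (ht l)
        have h4 : s k * t l ≤ τ * t l := mul_le_mul_of_nonneg_right (hsτ k) (ht l)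
        nlinarith [mul_le_mul_of_nonneg_left h1 h3, mul_le_mul_of_nonneg_right h4 h2]
    _ ≤ τ * t l := by
        rw [← Finset.mul_sum, Finset.sum_add_distrib]
        have h5 : 0 ≤ τ * t l := mul_nonneg hτ (ht l)
        nlinarith [mul_le_mul_of_nonneg_left (add_le_add hA hB) h5]


theorem stmt15 {n₁ n₂ : ℕ} (τ : ℝ) (hτ : 0 < τ)
    (X : Matrix (Fin n₁) (Fin n₂) ℝ) (σ : Fin (min n₁ n₂) → ℝ)
    (U : Matrix (Fin n₁) (Fin n₁) ℝ) (V : Matrix (Fin n₂) (Fin n₂) ℝ)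
    (hU : Uᵀ * U = 1) (hV : Vᵀ * V = 1)
    (hant : Antitone σ) (hpos : ∀ i, 0 ≤ σ i)
    (hX : X = U * diagRect σ * Vᵀ) :
    ∀ (W' : Matrix (Fin n₁) (Fin n₂) ℝ) (σ' : Fin (min n₁ n₂) → ℝ),
      IsSVDVals W' σ' →
      W' ≠ U * diagRect (fun i => max (σ i - τ) 0) * Vᵀ →
      (1 / 2) * (frob (X - U * diagRect (fun i => max (σ i - τ) 0) * Vᵀ)) ^ 2 +
          τ * ∑ i, max (σ i - τ) 0 <
        (1 / 2) * (frob (X - W')) ^ 2 + τ * ∑ i, σ' i := by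
  rintro W' σ' ⟨_, hσ', U', V', hU', hV', hW'⟩ hne
  have hG : X - U * diagRect (fun i => max (σ i - τ) 0) * Vᵀ
      = U * diagRect (fun i => min (σ i) τ) * Vᵀ := by
    rw [hX]
    ext i j
    rw [Matrix.sub_apply, svd_apply, svd_apply, svd_apply, ← Finset.sum_sub_distrib]
    refine Finset.sum_congr rfl fun k _ => ?_
    rw [← sub_mul]
    congr 1
    rcases le_total (σ k) τ with h | h
    · rw [max_eq_right (by linarith), min_eq_left h]; ring
    · rw [max_eq_left (by linarith), min_eq_right h]; ring
  have hexp := frob_expand X (U * diagRect (fun i => max (σ i - τ) 0) * Vᵀ) W'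
  have hpos' := ipF_self_pos _ (sub_ne_zero.2 hne)
  have hle : ipF (X - U * diagRect (fun i => max (σ i - τ) 0) * Vᵀ) W' ≤ τ * ∑ i, σ' i := by
    rw [hG, hW']
    exact ipF_svd_le U U' V V' hU hV hU' hV' _ _ τ (fun k => le_min (hpos k) hτ.le)
      (fun k => min_le_right _ _) hτ.le hσ'
  have heq : ipF (X - U * diagRect (fun i => max (σ i - τ) 0) * Vᵀ)
      (U * diagRect (fun i => max (σ i - τ) 0) * Vᵀ) = τ * ∑ i, max (σ i - τ) 0 := by
    rw [hG, ipF_svd_self U V hU hV, Finset.mul_sum]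
    refine Finset.sum_congr rfl fun k _ => ?_
    rcases le_total (σ k) τ with h | h
    · rw [max_eq_right (by linarith)]; ring
    · rw [min_eq_right h]
  rw [frob_sq_eq, frob_sq_eq]
  linarith
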